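/- Let S ∈ ℝ^{PN×PN} be invertible and suppose (ŝ, v̂) ∈ ℝ^P × ℝ^{PN} satisfies v̂ = T(ŝ) S v̂ and F(ŝ, v̂) = 0, where the function s := Σ_{α∈A} s_α Λ_α ∈ W_A satisfies s_* := inf_{y∈Γ} s(y) > 0; set û_A := S v̂. Then Δ(ŝ) is invertible with ‖Δ(ŝ)⁻¹‖ ≤ s_*⁻¹, and with ψ_max := ‖R(ŝ, v̂) S⁻¹‖ (operator norm with respect to ‖·‖_{ℝ^P⊗ℝ^N_M}), where R(ŝ, v̂)ŵ := ŵ − T(Δ(ŝ)⁻¹ F^v(v̂, ŵ)) T(ŝ)⁻¹ v̂, the following holds: letting t̂ be the implicit function with t̂(0) = 0 and F(ŝ + t̂(ŵ), v̂ + ŵ) = 0 near 0, and Φ(û) := T(ŝ + t̂(S⁻¹û − v̂))⁻¹ S⁻¹ û, for every ε > 0 there exists δ > 0 such that ‖Φ(û) − û_A‖_{ℝ^P⊗ℝ^N_M} ≤ (ψ_max/s_* + ε) ‖û − û_A‖_{ℝ^P⊗ℝ^N_M} whenever ‖û − û_A‖_{ℝ^P⊗ℝ^N_M} < δ. -/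

import Mathlib

open Matrix MeasureTheory Filter

/-!
Write `u_A = T(s)⁻¹ v` and let `σ(z)` be the solution of `F(σ(z), z) = 0` near `v` with `σ(v) = s`.
The equation says that two quadratic maps agree along `z ↦ (σ(z), z)`; half the derivative of the
first one at `s` is `Δ(s)`, so `σ` is differentiable at `v` with derivative
`w ↦ Δ(s)⁻¹ F^v(v, w)`, and the defect `z - T(σ(z)) u_A` has derivative `R(s, v)` there.

On the other hand `Δ(σ)` represents multiplication by the function with coefficients `σ`, hence is
bounded below by any `s_* - η` for `σ` near `s`. The error `T(σ(z))⁻¹ z - u_A` is `T(σ(z))⁻¹`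
applied to the defect, so its norm is at most `(ψ + η) / (s_* - η)` times that of `S (z - v)`, and
the factor tends to `ψ / s_*` as `η → 0`.
-/

open scoped Topology

section Calculus

variable {𝕜 E V W G H : Type*} [RCLike 𝕜]
  [NormedAddCommGroup E] [NormedSpace 𝕜 E] [NormedAddCommGroup V] [NormedSpace 𝕜 V]
  [NormedAddCommGroup W] [NormedSpace 𝕜 W] [NormedAddCommGroup G] [NormedSpace 𝕜 G]
  [NormedAddCommGroup H] [NormedSpace 𝕜 H]

lemma hasFDerivAt_half_smul_diag {B : E →L[𝕜] E →L[𝕜] W} (hB : ∀ x y, B x y = B y x) (x : E) :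
    HasFDerivAt (fun z ↦ (2⁻¹ : 𝕜) • B z z) (B x) x := by
  refine ((B.hasFDerivAt_of_bilinear (hasFDerivAt_id x) (hasFDerivAt_id x)).const_smul
    (2⁻¹ : 𝕜)).congr_fderiv (ContinuousLinearMap.ext fun y ↦ ?_)
  simp [hB y x, ← two_smul 𝕜]

lemma hasFDerivAt_of_eventually_diag_eq {D : V →L[𝕜] V →L[𝕜] W} {Q : E →L[𝕜] E →L[𝕜] W}
    (hD : ∀ x y, D x y = D y x) (hQ : ∀ x y, Q x y = Q y x) {σ : E → V} {v : E}
    (hσ : ContinuousAt σ v) (hDQ : ∀ᶠ z in 𝓝 v, D (σ z) (σ z) = Q z z)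
    {B : W →L[𝕜] V} (hB : Function.LeftInverse B (D (σ v))) :
    HasFDerivAt σ (B ∘L Q v) v :=
  (hasFDerivAt_half_smul_diag hD (σ v)).of_comp_of_leftInverse hσ
    (hasFDerivAt_half_smul_diag hQ v) (hDQ.mono fun _ h ↦ congrArg ((2⁻¹ : 𝕜) • ·) h) hB

lemma eventually_norm_sub_le_of_hasFDerivAt [FiniteDimensional 𝕜 E] {L : E →ₗ[𝕜] H}
    (hL : Function.Injective L) {f : E → G} {f' : E →L[𝕜] G} {x : E} (hf : HasFDerivAt f f' x)
    {ψ : ℝ} (hψ : ∀ w, ‖f' w‖ ≤ ψ * ‖L w‖) {η : ℝ} (hη : 0 < η) :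
    ∀ᶠ z in 𝓝 x, ‖f z - f x‖ ≤ (ψ + η) * ‖L (z - x)‖ := by
  obtain ⟨K, hK, hLK⟩ := L.exists_antilipschitzWith (LinearMap.ker_eq_bot.2 hL)
  filter_upwards [hf.isLittleO.def (div_pos hη (NNReal.coe_pos.2 hK))] with z hz
  have hzL : ‖z - x‖ ≤ K * ‖L (z - x)‖ := hLK.le_mul_norm (map_zero L) (z - x)
  calc ‖f z - f x‖ ≤ ‖f' (z - x)‖ + ‖f z - f x - f' (z - x)‖ := norm_le_insert' _ _
    _ ≤ ψ * ‖L (z - x)‖ + η / K * (K * ‖L (z - x)‖) := by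
        gcongr
        exacts [hψ _, hz.trans (by gcongr)]
    _ = (ψ + η) * ‖L (z - x)‖ := by field_simp

lemma exists_pos_lt_add_div_sub_le {a : ℝ} (ha : 0 < a) (ψ : ℝ) {ε : ℝ} (hε : 0 < ε) :
    ∃ η, 0 < η ∧ η < a ∧ (ψ + η) / (a - η) ≤ ψ / a + ε := by
  have hcont : ContinuousAt (fun η ↦ (ψ + η) / (a - η)) 0 :=
    ContinuousAt.div (by fun_prop) (by fun_prop) (by simpa using ha.ne')
  have hlim : Tendsto (fun η ↦ (ψ + η) / (a - η)) (𝓝[>] 0) (𝓝 (ψ / a)) := by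
    simpa using hcont.tendsto.mono_left nhdsWithin_le_nhds
  obtain ⟨η, hle, h0, ha⟩ := ((hlim.eventually_le_const (lt_add_of_pos_right _ hε)).and
    (Ioo_mem_nhdsGT ha)).exists
  exact ⟨η, h0, ha, hle⟩

end Calculus

section Coercive

variable {ι κ : Type*} [Fintype ι] [Fintype κ]

/-- The norm of `ℝ^ι ⊗ ℝ^κ_M`, whose elements are stored as `ι × κ` matrices: row `u α` is the
`α`-block. -/
noncomputable def blockNorm (M : Matrix κ κ ℝ) (u : Matrix ι κ ℝ) : ℝ :=
  √(∑ α, u α ⬝ᵥ (M *ᵥ u α))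

open scoped MatrixOrder in
lemma exists_blockNorm_eq_sqrt_sum_mul_sq {M : Matrix κ κ ℝ} (hM : M.PosSemidef) :
    ∃ B : Matrix κ κ ℝ, ∀ u : Matrix ι κ ℝ, blockNorm M u = √(∑ i, ∑ α, (u * B) α i ^ 2) := by
  classical
  obtain ⟨C, rfl⟩ := CStarAlgebra.nonneg_iff_eq_star_mul_self.1 hM.nonneg
  refine ⟨Cᵀ, fun u ↦ congrArg Real.sqrt ?_⟩
  rw [Finset.sum_comm]
  refine Finset.sum_congr rfl fun α _ ↦ ?_
  calc u α ⬝ᵥ ((star C * C) *ᵥ u α) = (C *ᵥ u α) ⬝ᵥ (C *ᵥ u α) := by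
        rw [star_eq_conjTranspose, conjTranspose_eq_transpose_of_trivial, ← mulVec_mulVec,
          dotProduct_mulVec, vecMul_transpose]
    _ = ∑ i, (u * Cᵀ) α i ^ 2 := by
        simp only [mul_apply, transpose_apply, dotProduct, mulVec, sq, mul_comm (C _ _)]

lemma exists_injective_norm_eq_blockNorm {M : Matrix κ κ ℝ} (hM : M.PosDef) :
    ∃ J : Matrix ι κ ℝ →ₗ[ℝ] EuclideanSpace ℝ (ι × κ),
      Function.Injective J ∧ ∀ u, ‖J u‖ = blockNorm M u := by
  obtain ⟨B, hB⟩ := exists_blockNorm_eq_sqrt_sum_mul_sq (ι := ι) hM.posSemidef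
  let J : Matrix ι κ ℝ →ₗ[ℝ] EuclideanSpace ℝ (ι × κ) :=
    (WithLp.linearEquiv 2 ℝ (ι × κ → ℝ)).symm.toLinearMap ∘ₗ
      (LinearEquiv.curry ℝ ℝ ι κ).symm.toLinearMap ∘ₗ mulRightLinearMap ι ℝ B
  have hJ (u : Matrix ι κ ℝ) : ‖J u‖ = blockNorm M u := by
    rw [hB, EuclideanSpace.norm_eq, Fintype.sum_prod_type_right]
    simp only [Real.norm_eq_abs, sq_abs]
    rfl
  refine ⟨J, (injective_iff_map_eq_zero J).2 fun u hu ↦ ?_, hJ⟩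
  have hnonneg (α : ι) : 0 ≤ u α ⬝ᵥ (M *ᵥ u α) := hM.posSemidef.dotProduct_mulVec_nonneg (u α)
  have hsum : ∑ α, u α ⬝ᵥ (M *ᵥ u α) = 0 := by
    rw [← Real.sqrt_eq_zero (Finset.sum_nonneg fun α _ ↦ hnonneg α)]
    exact (hJ u).symm.trans (by rw [hu, norm_zero])
  funext α
  by_contra hα
  exact (hM.dotProduct_mulVec_pos hα).ne'
    ((Finset.sum_eq_zero_iff_of_nonneg fun α _ ↦ hnonneg α).1 hsum α (Finset.mem_univ α))

open scoped Matrix.Norms.Elementwise in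
lemma exists_pos_forall_blockNorm_lt {M : Matrix κ κ ℝ} (hM : M.PosDef)
    {S : Matrix ι κ ℝ →ₗ[ℝ] Matrix ι κ ℝ} (hS : Function.Injective S) {v : Matrix ι κ ℝ}
    {p : Matrix ι κ ℝ → Prop} (hp : ∀ᶠ z in 𝓝 v, p z) :
    ∃ δ > 0, ∀ z, blockNorm M (S (z - v)) < δ → p z := by
  obtain ⟨J, hJinj, hJ⟩ := exists_injective_norm_eq_blockNorm (ι := ι) hM
  have hembed := LinearMap.isClosedEmbedding_of_injective (f := J ∘ₗ S)
    (LinearMap.ker_eq_bot.2 (hJinj.comp hS))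
  rw [hembed.isInducing.nhds_eq_comap, (Metric.nhds_basis_ball.comap _).eventually_iff] at hp
  obtain ⟨δ, hδ, hball⟩ := hp
  refine ⟨δ, hδ, fun z hz ↦ hball ?_⟩
  rwa [Set.mem_preimage, mem_ball_iff_norm, ← map_sub, LinearMap.comp_apply, hJ]

/-- The quadratic form of `A` dominates `a` times the squared Euclidean norm. -/
def CoerciveWith (a : ℝ) (A : Matrix ι ι ℝ) : Prop :=
  ∀ x : ι → ℝ, a * (x ⬝ᵥ x) ≤ x ⬝ᵥ (A *ᵥ x)

namespace CoerciveWith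

variable {a : ℝ} {A : Matrix ι ι ℝ}

lemma sq_mul_dotProduct_self_le (hA : CoerciveWith a A) (ha : 0 ≤ a) (x : ι → ℝ) :
    a ^ 2 * (x ⬝ᵥ x) ≤ (A *ᵥ x) ⬝ᵥ (A *ᵥ x) := by
  have hsq : 0 ≤ (A *ᵥ x - a • x) ⬝ᵥ (A *ᵥ x - a • x) :=
    Finset.sum_nonneg fun _ _ ↦ mul_self_nonneg _
  simp only [sub_dotProduct, dotProduct_sub, smul_dotProduct, dotProduct_smul, smul_eq_mul,
    dotProduct_comm (A *ᵥ x) x] at hsq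
  nlinarith [mul_le_mul_of_nonneg_left (hA x) ha]

lemma mul_blockNorm_le (hA : CoerciveWith a A) (ha : 0 ≤ a) {M : Matrix κ κ ℝ}
    (hM : M.PosSemidef) (u : Matrix ι κ ℝ) : a * blockNorm M u ≤ blockNorm M (A * u) := by
  obtain ⟨B, hB⟩ := exists_blockNorm_eq_sqrt_sum_mul_sq (ι := ι) hM
  rw [hB, hB, Matrix.mul_assoc]
  refine Real.le_sqrt_of_sq_le ?_
  rw [mul_pow, Real.sq_sqrt (by positivity), Finset.mul_sum]
  refine Finset.sum_le_sum fun i _ ↦ ?_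
  simpa only [dotProduct, mulVec, sq, mul_apply] using
    hA.sq_mul_dotProduct_self_le ha fun α ↦ (u * B) α i

variable [DecidableEq ι]

lemma isUnit (hA : CoerciveWith a A) (ha : 0 < a) : IsUnit A := by
  refine mulVec_injective_iff_isUnit.1 ((injective_iff_map_eq_zero A.mulVecLin).2 fun x hx ↦ ?_)
  have hle : a * (x ⬝ᵥ x) ≤ 0 := by simpa [show A *ᵥ x = 0 from hx] using hA x
  have hnonneg : 0 ≤ x ⬝ᵥ x := Finset.sum_nonneg fun _ _ ↦ mul_self_nonneg _
  exact dotProduct_self_eq_zero.1 (le_antisymm (nonpos_of_mul_nonpos_right hle ha) hnonneg)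

lemma sqrt_inv_mulVec_le (hA : CoerciveWith a A) (ha : 0 < a) (x : ι → ℝ) :
    √((A⁻¹ *ᵥ x) ⬝ᵥ (A⁻¹ *ᵥ x)) ≤ a⁻¹ * √(x ⬝ᵥ x) := by
  have hle := hA.sq_mul_dotProduct_self_le ha.le (A⁻¹ *ᵥ x)
  rw [mulVec_mulVec, mul_nonsing_inv _ ((isUnit_iff_isUnit_det A).1 (hA.isUnit ha)),
    one_mulVec] at hle
  rw [le_inv_mul_iff₀ ha]
  calc a * √((A⁻¹ *ᵥ x) ⬝ᵥ (A⁻¹ *ᵥ x)) = √(a ^ 2 * ((A⁻¹ *ᵥ x) ⬝ᵥ (A⁻¹ *ᵥ x))) := by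
        rw [Real.sqrt_mul (sq_nonneg a), Real.sqrt_sq ha.le]
    _ ≤ √(x ⬝ᵥ x) := Real.sqrt_le_sqrt hle

lemma blockNorm_inv_mul_sub_le (hA : CoerciveWith a A) (ha : 0 < a) {M : Matrix κ κ ℝ}
    (hM : M.PosSemidef) (u z : Matrix ι κ ℝ) :
    blockNorm M (A⁻¹ * z - u) ≤ blockNorm M (z - A * u) / a := by
  have hmul : A * (A⁻¹ * z - u) = z - A * u := by
    rw [Matrix.mul_sub, mul_nonsing_inv_cancel_left A z
      ((isUnit_iff_isUnit_det A).1 (hA.isUnit ha))]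
  rw [le_div_iff₀' ha, ← hmul]
  exact hA.mul_blockNorm_le ha.le hM _

end CoerciveWith

end Coercive

section Galerkin

variable {ι κ : Type*} [Fintype ι] [Fintype κ]

/-- Invariance of a three-index tensor under all permutations of its indices, expressed through
the two generating transpositions. -/
structure IsSymmTensor (c : ι → ι → ι → ℝ) : Prop where
  swap_left : ∀ α β γ, c α β γ = c β α γ
  swap_right : ∀ α β γ, c α β γ = c α γ β

/-- The matrix `Δ(s)` of multiplication by the function with coefficients `s`, when `c` holds the
structure constants of multiplication. On block vectors stored as `ι × κ` matrices, left
multiplication by `Δ(s)` is the operator `T(s)`. -/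
def galerkinMatrix (c : ι → ι → ι → ℝ) : (ι → ℝ) →ₗ[ℝ] Matrix ι ι ℝ where
  toFun s := Matrix.of fun α β ↦ ∑ γ, c γ α β * s γ
  map_add' s s' := by
    ext α β
    simp [mul_add, Finset.sum_add_distrib]
  map_smul' r s := by
    ext α β
    simp [Finset.mul_sum, mul_left_comm]

/-- The bilinear map `F^v`, whose `α`-component at `(v, w)` is `vᵀ (G^(α) ⊗ M) w`. -/
def galerkinForm (c : ι → ι → ι → ℝ) (M : Matrix κ κ ℝ) :
    Matrix ι κ ℝ →ₗ[ℝ] Matrix ι κ ℝ →ₗ[ℝ] (ι → ℝ) :=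
  LinearMap.mk₂ ℝ (fun v w α ↦ ∑ β, ∑ γ, c α β γ * (v β ⬝ᵥ (M *ᵥ w γ)))
    (fun v v' w ↦ by
      ext α
      simp only [show ∀ β, (v + v') β = v β + v' β from fun _ ↦ rfl, add_dotProduct, mul_add,
        Finset.sum_add_distrib, Pi.add_apply])
    (fun r v w ↦ by
      ext α
      simp only [show ∀ β, (r • v) β = r • v β from fun _ ↦ rfl, smul_dotProduct, smul_eq_mul,
        mul_left_comm _ r, ← Finset.mul_sum, Pi.smul_apply])
    (fun v w w' ↦ by
      ext α
      simp only [show ∀ γ, (w + w') γ = w γ + w' γ from fun _ ↦ rfl, mulVec_add, dotProduct_add,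
        mul_add, Finset.sum_add_distrib, Pi.add_apply])
    (fun r v w ↦ by
      ext α
      simp only [show ∀ γ, (r • w) γ = r • w γ from fun _ ↦ rfl, mulVec_smul, dotProduct_smul,
        smul_eq_mul, mul_left_comm _ r, ← Finset.mul_sum, Pi.smul_apply])

/-- The normalization residual `F(s, v)`, with components `sᵀ G^(α) s - vᵀ (G^(α) ⊗ M) v`. -/
def normalizationResidual (c : ι → ι → ι → ℝ) (M : Matrix κ κ ℝ) (s : ι → ℝ)
    (v : Matrix ι κ ℝ) : ι → ℝ :=
  fun α ↦ (∑ β, ∑ γ, c α β γ * s β * s γ) - galerkinForm c M v v α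

/-- The operator `R(s, v)`: the derivative at `v` of the defect `z - T(σ(z)) T(s)⁻¹ v`, where `σ`
is the function defined implicitly by `F(σ(z), z) = 0` and `σ(v) = s`. -/
noncomputable def linearizedDefect [DecidableEq ι] (c : ι → ι → ι → ℝ) (M : Matrix κ κ ℝ)
    (s : ι → ℝ) (v w : Matrix ι κ ℝ) : Matrix ι κ ℝ :=
  w - galerkinMatrix c ((galerkinMatrix c s)⁻¹ *ᵥ galerkinForm c M v w) *
    ((galerkinMatrix c s)⁻¹ * v)

variable {c : ι → ι → ι → ℝ} {M : Matrix κ κ ℝ}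

lemma galerkinForm_apply (v w : Matrix ι κ ℝ) (α : ι) :
    galerkinForm c M v w α = ∑ β, ∑ γ, c α β γ * (v β ⬝ᵥ (M *ᵥ w γ)) := rfl

lemma galerkinMatrix_mulVec_apply (hc : IsSymmTensor c) (s x : ι → ℝ) (α : ι) :
    (galerkinMatrix c s *ᵥ x) α = ∑ β, ∑ γ, c α β γ * s β * x γ := by
  have hperm (β γ : ι) : c α β γ = c β α γ := hc.swap_left α β γ
  simp only [galerkinMatrix, LinearMap.coe_mk, AddHom.coe_mk, mulVec, dotProduct, of_apply,
    Finset.sum_mul, hperm]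
  exact Finset.sum_comm

lemma galerkinMatrix_mulVec_comm (hc : IsSymmTensor c) (s x : ι → ℝ) :
    galerkinMatrix c s *ᵥ x = galerkinMatrix c x *ᵥ s := by
  ext α
  rw [galerkinMatrix_mulVec_apply hc, galerkinMatrix_mulVec_apply hc, Finset.sum_comm]
  simp only [hc.swap_right α, mul_right_comm]

lemma galerkinForm_comm (hc : IsSymmTensor c) (hM : M.IsSymm) (v w : Matrix ι κ ℝ) :
    galerkinForm c M v w = galerkinForm c M w v := by
  ext α
  rw [galerkinForm_apply, galerkinForm_apply, Finset.sum_comm]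
  refine Finset.sum_congr rfl fun β _ ↦ Finset.sum_congr rfl fun γ _ ↦ ?_
  rw [hc.swap_right, dotProduct_mulVec, ← mulVec_transpose, hM, dotProduct_comm]

lemma galerkinMatrix_mulVec_self_eq (hc : IsSymmTensor c) {s : ι → ℝ} {v : Matrix ι κ ℝ}
    (hsv : normalizationResidual c M s v = 0) :
    galerkinMatrix c s *ᵥ s = galerkinForm c M v v := by
  ext α
  rw [galerkinMatrix_mulVec_apply hc]
  exact sub_eq_zero.1 (congrFun hsv α)

variable [DecidableEq ι]

open scoped Matrix.Norms.Elementwise in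
lemma hasFDerivAt_of_eventually_normalizationResidual_eq_zero (hc : IsSymmTensor c)
    (hM : M.IsSymm) {σ : Matrix ι κ ℝ → ι → ℝ} {v : Matrix ι κ ℝ} (hσ : ContinuousAt σ v)
    (hunit : IsUnit (galerkinMatrix c (σ v)))
    (hzero : ∀ᶠ z in 𝓝 v, normalizationResidual c M (σ z) z = 0) :
    HasFDerivAt σ
      ((galerkinMatrix c (σ v))⁻¹.mulVecLin ∘ₗ galerkinForm c M v).toContinuousLinearMap v := by
  let D : (ι → ℝ) →ₗ[ℝ] (ι → ℝ) →ₗ[ℝ] (ι → ℝ) := mulVecBilin ℝ ℝ ∘ₗ galerkinMatrix c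
  refine hasFDerivAt_of_eventually_diag_eq (D := D.toContinuousBilinearMap)
    (Q := (galerkinForm c M).toContinuousBilinearMap)
    (B := (galerkinMatrix c (σ v))⁻¹.mulVecLin.toContinuousLinearMap)
    (galerkinMatrix_mulVec_comm hc) (galerkinForm_comm hc hM) hσ
    (hzero.mono fun z ↦ galerkinMatrix_mulVec_self_eq hc) fun x ↦ ?_
  change (galerkinMatrix c (σ v))⁻¹ *ᵥ (galerkinMatrix c (σ v) *ᵥ x) = x
  rw [mulVec_mulVec, nonsing_inv_mul _ ((isUnit_iff_isUnit_det _).1 hunit), one_mulVec]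

open scoped Matrix.Norms.Elementwise in
lemma eventually_blockNorm_defect_le (hc : IsSymmTensor c) (hM : M.PosDef)
    {σ : Matrix ι κ ℝ → ι → ℝ} {v : Matrix ι κ ℝ} (hσ : ContinuousAt σ v)
    (hunit : IsUnit (galerkinMatrix c (σ v)))
    (hzero : ∀ᶠ z in 𝓝 v, normalizationResidual c M (σ z) z = 0)
    {S : Matrix ι κ ℝ →ₗ[ℝ] Matrix ι κ ℝ} (hS : Function.Injective S) {ψ : ℝ}
    (hψ : ∀ w, blockNorm M (linearizedDefect c M (σ v) v w) ≤ ψ * blockNorm M (S w))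
    {η : ℝ} (hη : 0 < η) :
    ∀ᶠ z in 𝓝 v, blockNorm M (z - galerkinMatrix c (σ z) * ((galerkinMatrix c (σ v))⁻¹ * v)) ≤
      (ψ + η) * blockNorm M (S (z - v)) := by
  obtain ⟨J, hJinj, hJ⟩ := exists_injective_norm_eq_blockNorm (ι := ι) hM
  have hMsymm : M.IsSymm := (conjTranspose_eq_transpose_of_trivial M).symm.trans hM.isHermitian
  set u := (galerkinMatrix c (σ v))⁻¹ * v with hu
  let mulΔ : (ι → ℝ) →ₗ[ℝ] Matrix ι κ ℝ := mulRightLinearMap ι ℝ u ∘ₗ galerkinMatrix c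
  have hderiv : HasFDerivAt (fun z ↦ J (z - galerkinMatrix c (σ z) * u)) _ v :=
    J.toContinuousLinearMap.hasFDerivAt.comp v ((hasFDerivAt_id v).sub
      (mulΔ.toContinuousLinearMap.hasFDerivAt.comp v
        (hasFDerivAt_of_eventually_normalizationResidual_eq_zero hc hMsymm hσ hunit hzero)))
  have hv : v - galerkinMatrix c (σ v) * u = 0 := by
    rw [hu, mul_nonsing_inv_cancel_left _ _ ((isUnit_iff_isUnit_det _).1 hunit), sub_self]
  have hψJ (w : Matrix ι κ ℝ) :
      ‖J (linearizedDefect c M (σ v) v w)‖ ≤ ψ * ‖(J ∘ₗ S) w‖ := by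
    simpa only [LinearMap.comp_apply, hJ] using hψ w
  filter_upwards [eventually_norm_sub_le_of_hasFDerivAt (L := J ∘ₗ S) (hJinj.comp hS)
    hderiv hψJ hη] with z hz
  simpa only [hv, map_zero, sub_zero, LinearMap.comp_apply, hJ] using hz

lemma eventually_blockNorm_inv_mul_sub_le (hc : IsSymmTensor c) (hM : M.PosDef)
    {σ : Matrix ι κ ℝ → ι → ℝ} {v : Matrix ι κ ℝ} (hσ : ContinuousAt σ v)
    (hzero : ∀ᶠ z in 𝓝 v, normalizationResidual c M (σ z) z = 0) {a : ℝ} (ha : 0 < a)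
    (hcoercive : ∀ b < a, ∀ᶠ s in 𝓝 (σ v), CoerciveWith b (galerkinMatrix c s))
    {S : Matrix ι κ ℝ →ₗ[ℝ] Matrix ι κ ℝ} (hS : Function.Injective S) {ψ : ℝ}
    (hψ : ∀ w, blockNorm M (linearizedDefect c M (σ v) v w) ≤ ψ * blockNorm M (S w))
    {ε : ℝ} (hε : 0 < ε) :
    ∀ᶠ z in 𝓝 v,
      blockNorm M ((galerkinMatrix c (σ z))⁻¹ * z - (galerkinMatrix c (σ v))⁻¹ * v) ≤
        (ψ / a + ε) * blockNorm M (S (z - v)) := by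
  obtain ⟨η, hη, hηa, hratio⟩ := exists_pos_lt_add_div_sub_le ha ψ hε
  have hpos : 0 < a - η := sub_pos.2 hηa
  have hnear := hcoercive (a - η) (sub_lt_self a hη)
  have hdefect := eventually_blockNorm_defect_le hc hM hσ (hnear.self_of_nhds.isUnit hpos) hzero
    hS hψ hη
  filter_upwards [hσ.eventually hnear, hdefect] with z hcoer hdef
  set u := (galerkinMatrix c (σ v))⁻¹ * v
  calc blockNorm M ((galerkinMatrix c (σ z))⁻¹ * z - u)
      ≤ blockNorm M (z - galerkinMatrix c (σ z) * u) / (a - η) :=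
        hcoer.blockNorm_inv_mul_sub_le hpos hM.posSemidef u z
    _ ≤ (ψ + η) * blockNorm M (S (z - v)) / (a - η) := by gcongr
    _ = (ψ + η) / (a - η) * blockNorm M (S (z - v)) := by ring
    _ ≤ (ψ / a + ε) * blockNorm M (S (z - v)) := by
        gcongr
        exact Real.sqrt_nonneg _

end Galerkin

section Expansion

variable {Γ ι : Type*} {Λ : ι → Γ → ℝ}

/-- The function `∑ α, x α Λ_α` of the span of `Λ` with coefficient vector `x`. -/
def expansion [Fintype ι] (Λ : ι → Γ → ℝ) (x : ι → ℝ) (y : Γ) : ℝ := ∑ α, x α * Λ α y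

lemma mul_expansion_sq [Fintype ι] (r : ℝ) (x : ι → ℝ) (y : Γ) :
    r * expansion Λ x y ^ 2 = ∑ α, ∑ β, x α * x β * (r * (Λ α y * Λ β y)) := by
  rw [expansion, sq, Finset.sum_mul_sum, Finset.mul_sum]
  refine Finset.sum_congr rfl fun α _ ↦ ?_
  rw [Finset.mul_sum]
  exact Finset.sum_congr rfl fun β _ ↦ by ring

variable [MeasurableSpace Γ] {ν : Measure Γ}

/-- The structure constants `c_{αβγ}` of multiplication of the functions `Λ`. -/
noncomputable def tripleProduct (ν : Measure Γ) (Λ : ι → Γ → ℝ) (α β γ : ι) : ℝ :=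
  ∫ y, Λ α y * Λ β y * Λ γ y ∂ν

lemma isSymmTensor_tripleProduct : IsSymmTensor (tripleProduct ν Λ) where
  swap_left α β γ := by simp only [tripleProduct, mul_comm (Λ α _)]
  swap_right α β γ := by simp only [tripleProduct, mul_right_comm]

/-- The Gram matrix of the functions `Λ` in `L²` with weight `f`. -/
noncomputable def weightedGram (ν : Measure Γ) (Λ : ι → Γ → ℝ) (f : Γ → ℝ) : Matrix ι ι ℝ :=
  Matrix.of fun α β ↦ ∫ y, f y * (Λ α y * Λ β y) ∂ν

/-- Orthonormality in `L²` of a family of functions, as opposed to one of `L²` classes. Square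
integrability is encoded in `integral_mul`: else the Bochner integral of `Λ_α²` would be `0`. -/
structure IsOrthonormalFamily [DecidableEq ι] (ν : Measure Γ) (Λ : ι → Γ → ℝ) : Prop where
  aestronglyMeasurable : ∀ α, AEStronglyMeasurable (Λ α) ν
  integral_mul : ∀ α β, ∫ y, Λ α y * Λ β y ∂ν = if α = β then 1 else 0

namespace IsOrthonormalFamily

variable [DecidableEq ι] (hΛ : IsOrthonormalFamily ν Λ)
include hΛ

lemma memLp_two (α : ι) : MemLp (Λ α) 2 ν := by
  rw [memLp_two_iff_integrable_sq (hΛ.aestronglyMeasurable α)]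
  simp only [sq]
  exact Integrable.of_integral_ne_zero (by simp [hΛ.integral_mul])

lemma integrable_mul (α β : ι) : Integrable (fun y ↦ Λ α y * Λ β y) ν :=
  (hΛ.memLp_two α).integrable_mul (hΛ.memLp_two β)

lemma integrable_mul_mul {α : ι} (hα : ∃ C : ℝ, ∀ᵐ y ∂ν, |Λ α y| ≤ C) (β γ : ι) :
    Integrable (fun y ↦ Λ α y * (Λ β y * Λ γ y)) ν := by
  obtain ⟨C, hC⟩ := hα
  exact (hΛ.integrable_mul β γ).bdd_mul (hΛ.aestronglyMeasurable α) hC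

lemma weightedGram_const (a : ℝ) : weightedGram ν Λ (fun _ ↦ a) = a • 1 := by
  ext α β
  simp only [weightedGram, of_apply, integral_const_mul, hΛ.integral_mul, Matrix.smul_apply,
    one_apply, smul_eq_mul]

end IsOrthonormalFamily

variable [Fintype ι]

lemma eventually_ae_le_expansion (hbdd : ∀ α, ∃ C : ℝ, ∀ᵐ y ∂ν, |Λ α y| ≤ C) {s : ι → ℝ}
    {a b : ℝ} (hs : ∀ᵐ y ∂ν, a ≤ expansion Λ s y) (hba : b < a) :
    ∀ᶠ σ in 𝓝 s, ∀ᵐ y ∂ν, b ≤ expansion Λ σ y := by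
  choose C hC using hbdd
  have hlim : Tendsto (fun σ : ι → ℝ ↦ ∑ α, |s α - σ α| * C α) (𝓝 s) (𝓝 0) := by
    have hcont : Continuous fun σ : ι → ℝ ↦ ∑ α, |s α - σ α| * C α := by fun_prop
    simpa using hcont.tendsto s
  filter_upwards [hlim.eventually_lt_const (sub_pos.2 hba)] with σ hσ
  filter_upwards [hs, ae_all_iff.2 hC] with y hy hCy
  have hdiff : expansion Λ s y - expansion Λ σ y ≤ ∑ α, |s α - σ α| * C α := by
    simp only [expansion, ← Finset.sum_sub_distrib, ← sub_mul]
    refine Finset.sum_le_sum fun α _ ↦ (le_abs_self _).trans ?_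
    rw [abs_mul]
    gcongr
    exact hCy α
  linarith

lemma integrable_mul_expansion_sq {f : Γ → ℝ}
    (hf : ∀ α β, Integrable (fun y ↦ f y * (Λ α y * Λ β y)) ν) (x : ι → ℝ) :
    Integrable (fun y ↦ f y * expansion Λ x y ^ 2) ν := by
  simp only [mul_expansion_sq]
  exact integrable_finsetSum _ fun α _ ↦ integrable_finsetSum _ fun β _ ↦ (hf α β).const_mul _

lemma integral_mul_expansion_sq {f : Γ → ℝ}
    (hf : ∀ α β, Integrable (fun y ↦ f y * (Λ α y * Λ β y)) ν) (x : ι → ℝ) :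
    ∫ y, f y * expansion Λ x y ^ 2 ∂ν = x ⬝ᵥ (weightedGram ν Λ f *ᵥ x) := by
  simp only [mul_expansion_sq, dotProduct, mulVec, Finset.mul_sum, weightedGram, of_apply]
  rw [integral_finsetSum _ fun α _ ↦ integrable_finsetSum _ fun β _ ↦ (hf α β).const_mul _]
  refine Finset.sum_congr rfl fun α _ ↦ ?_
  rw [integral_finsetSum _ fun β _ ↦ (hf α β).const_mul _]
  refine Finset.sum_congr rfl fun β _ ↦ ?_
  rw [integral_const_mul]
  ring

namespace IsOrthonormalFamily

variable [DecidableEq ι] (hΛ : IsOrthonormalFamily ν Λ)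
include hΛ

lemma coerciveWith_weightedGram {f : Γ → ℝ}
    (hf : ∀ α β, Integrable (fun y ↦ f y * (Λ α y * Λ β y)) ν) {a : ℝ} (ha : ∀ᵐ y ∂ν, a ≤ f y) :
    CoerciveWith a (weightedGram ν Λ f) := by
  intro x
  have hconst (α β : ι) : Integrable (fun y ↦ a * (Λ α y * Λ β y)) ν :=
    (hΛ.integrable_mul α β).const_mul a
  calc a * (x ⬝ᵥ x) = ∫ y, a * expansion Λ x y ^ 2 ∂ν := by
        rw [integral_mul_expansion_sq hconst, hΛ.weightedGram_const, smul_mulVec, one_mulVec,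
          dotProduct_smul, smul_eq_mul]
    _ ≤ ∫ y, f y * expansion Λ x y ^ 2 ∂ν :=
        integral_mono_ae (integrable_mul_expansion_sq hconst x) (integrable_mul_expansion_sq hf x)
          (ha.mono fun y hy ↦ mul_le_mul_of_nonneg_right hy (sq_nonneg _))
    _ = x ⬝ᵥ (weightedGram ν Λ f *ᵥ x) := integral_mul_expansion_sq hf x

variable (hbdd : ∀ α, ∃ C : ℝ, ∀ᵐ y ∂ν, |Λ α y| ≤ C)
include hbdd

lemma integrable_expansion_mul (s : ι → ℝ) (α β : ι) :
    Integrable (fun y ↦ expansion Λ s y * (Λ α y * Λ β y)) ν := by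
  simp only [expansion, Finset.sum_mul, mul_assoc (s _)]
  exact integrable_finsetSum _ fun γ _ ↦ (hΛ.integrable_mul_mul (hbdd γ) α β).const_mul _

lemma galerkinMatrix_tripleProduct (s : ι → ℝ) :
    galerkinMatrix (tripleProduct ν Λ) s = weightedGram ν Λ (expansion Λ s) := by
  ext α β
  simp only [galerkinMatrix, LinearMap.coe_mk, AddHom.coe_mk, weightedGram, of_apply, expansion,
    Finset.sum_mul, tripleProduct, mul_assoc]
  rw [integral_finsetSum _ fun γ _ ↦ (hΛ.integrable_mul_mul (hbdd γ) α β).const_mul _]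
  simp only [integral_mul_const, mul_comm (s _)]

lemma coerciveWith_galerkinMatrix {s : ι → ℝ} {a : ℝ} (hs : ∀ᵐ y ∂ν, a ≤ expansion Λ s y) :
    CoerciveWith a (galerkinMatrix (tripleProduct ν Λ) s) := by
  rw [hΛ.galerkinMatrix_tripleProduct hbdd]
  exact hΛ.coerciveWith_weightedGram (hΛ.integrable_expansion_mul hbdd s) hs

end IsOrthonormalFamily

end Expansion

theorem stmt14_general {Γ ι κ : Type*} [MeasurableSpace Γ] [Fintype ι] [DecidableEq ι] [Fintype κ]
    {ν : Measure Γ} {Λ : ι → Γ → ℝ} (hΛ : IsOrthonormalFamily ν Λ)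
    (hbdd : ∀ α, ∃ C : ℝ, ∀ᵐ y ∂ν, |Λ α y| ≤ C) {M : Matrix κ κ ℝ} (hM : M.PosDef)
    (S : Matrix ι κ ℝ ≃ₗ[ℝ] Matrix ι κ ℝ) {s : ι → ℝ} {v : Matrix ι κ ℝ}
    (hfix : v = galerkinMatrix (tripleProduct ν Λ) s * S v)
    {a : ℝ} (ha : 0 < a) (hs : ∀ᵐ y ∂ν, a ≤ expansion Λ s y) {ψ : ℝ}
    (hψ : ∀ w, blockNorm M (linearizedDefect (tripleProduct ν Λ) M s v (S.symm w)) ≤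
      ψ * blockNorm M w) :
    IsUnit (galerkinMatrix (tripleProduct ν Λ) s) ∧
    (∀ x, √(((galerkinMatrix (tripleProduct ν Λ) s)⁻¹ *ᵥ x) ⬝ᵥ
      ((galerkinMatrix (tripleProduct ν Λ) s)⁻¹ *ᵥ x)) ≤ a⁻¹ * √(x ⬝ᵥ x)) ∧
    ∀ t : Matrix ι κ ℝ → ι → ℝ, t 0 = 0 → ContinuousAt t 0 →
      (∀ᶠ w in 𝓝 0, normalizationResidual (tripleProduct ν Λ) M (s + t w) (v + w) = 0) →
      ∀ ε > 0, ∃ δ > 0, ∀ u, blockNorm M (u - S v) < δ →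
        blockNorm M ((galerkinMatrix (tripleProduct ν Λ) (s + t (S.symm u - v)))⁻¹ * S.symm u -
          S v) ≤ (ψ / a + ε) * blockNorm M (u - S v) := by
  have hcoer := hΛ.coerciveWith_galerkinMatrix hbdd hs
  refine ⟨hcoer.isUnit ha, hcoer.sqrt_inv_mulVec_le ha, fun t ht0 htcont htzero ε hε ↦ ?_⟩
  let σ (z : Matrix ι κ ℝ) : ι → ℝ := s + t (z - v)
  have hσv : σ v = s := by simp only [σ, sub_self, ht0, add_zero]
  have hsub : Tendsto (fun z ↦ z - v) (𝓝 v) (𝓝 0) :=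
    tendsto_sub_nhds_zero_iff.2 tendsto_id
  have hσ : ContinuousAt σ v :=
    continuousAt_const.add (htcont.comp_of_eq (by fun_prop) (sub_self v))
  have hzero : ∀ᶠ z in 𝓝 v, normalizationResidual (tripleProduct ν Λ) M (σ z) z = 0 := by
    simpa only [add_sub_cancel] using hsub.eventually htzero
  have hinv : (galerkinMatrix (tripleProduct ν Λ) s)⁻¹ * v = S v := by
    nth_rw 1 [hfix]
    exact nonsing_inv_mul_cancel_left _ _ ((isUnit_iff_isUnit_det _).1 (hcoer.isUnit ha))
  have hstep := eventually_blockNorm_inv_mul_sub_le (ψ := ψ) (S := S.toLinearMap)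
    isSymmTensor_tripleProduct hM hσ hzero ha
    (fun b hb ↦ hσv ▸ (eventually_ae_le_expansion hbdd hs hb).mono
      fun _ ↦ hΛ.coerciveWith_galerkinMatrix hbdd)
    S.injective (fun w ↦ by simpa [hσv] using hψ (S w)) hε
  obtain ⟨δ, hδ, hbound⟩ := exists_pos_forall_blockNorm_lt hM (S := S.toLinearMap) S.injective hstep
  refine ⟨δ, hδ, fun u hu ↦ ?_⟩
  simpa only [hσv, hinv, LinearEquiv.coe_coe, map_sub, LinearEquiv.apply_symm_apply] using
    hbound (S.symm u) (by simpa using hu)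

/-- Corollary 5.9 of Hakula–Laaksonen: for a fixed point of the spectral inverse
iteration with `s(y) ≥ s_* > 0` on `Γ`, the matrix `Δ(ŝ)` is invertible with
`‖Δ(ŝ)⁻¹‖ ≤ s_*⁻¹`, and one step of the iteration contracts the error near the fixed
point with asymptotic factor `ψ_max / s_*`. -/
theorem stmt14
    {Γ : Type*} [MeasurableSpace Γ] (ν : Measure Γ) [IsProbabilityMeasure ν]
    {ι : Type*} [Fintype ι] [DecidableEq ι]
    (Λ : ι → Γ → ℝ)
    (hΛmeas : ∀ α, Measurable (Λ α))
    (hΛbdd : ∀ α, ∃ C : ℝ, ∀ᵐ y ∂ν, |Λ α y| ≤ C)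
    (hortho : ∀ α β, (∫ y, Λ α y * Λ β y ∂ν) = if α = β then 1 else 0)
    (c : ι → ι → ι → ℝ)
    (hc : ∀ α β γ, c α β γ = ∫ y, Λ α y * Λ β y * Λ γ y ∂ν)
    (N : ℕ)
    (M : Matrix (Fin N) (Fin N) ℝ)
    (hMsymm : Mᵀ = M)
    (hMpos : ∀ z : Fin N → ℝ, z ≠ 0 → 0 < z ⬝ᵥ (M *ᵥ z))
    (F : (ι → ℝ) → (ι → Fin N → ℝ) → ι → ℝ)
    (hF : F = fun sh vh α => (∑ β, ∑ γ, c α β γ * sh β * sh γ) -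
        ∑ β, ∑ γ, c α β γ * (vh β ⬝ᵥ (M *ᵥ vh γ)))
    (Fv : (ι → Fin N → ℝ) → (ι → Fin N → ℝ) → ι → ℝ)
    (hFv : Fv = fun vh wh α => ∑ β, ∑ γ, c α β γ * (vh β ⬝ᵥ (M *ᵥ wh γ)))
    (Δ : (ι → ℝ) → Matrix ι ι ℝ)
    (hΔ : Δ = fun sh => Matrix.of fun α β => ∑ γ, c γ α β * sh γ)
    (T : (ι → ℝ) → (ι → Fin N → ℝ) → ι → Fin N → ℝ)
    (hT : T = fun sh u α i => ∑ β, Δ sh α β * u β i)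
    (MnormPN : (ι → Fin N → ℝ) → ℝ)
    (hMnormPN : MnormPN = fun u => Real.sqrt (∑ α, u α ⬝ᵥ (M *ᵥ u α)))
    (S : (ι → Fin N → ℝ) ≃ₗ[ℝ] (ι → Fin N → ℝ))
    (sh : ι → ℝ) (vh : ι → Fin N → ℝ)
    (hfix : vh = T sh (S vh))
    (hFzero : F sh vh = 0)
    (sstar : ℝ) (hsstar : 0 < sstar)
    (hs_lb : ∀ y, sstar ≤ ∑ α, sh α * Λ α y)
    (uA : ι → Fin N → ℝ) (huA : uA = S vh)
    (Rop : (ι → Fin N → ℝ) → ι → Fin N → ℝ)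
    (hRop : Rop = fun w =>
      w - T ((Δ sh)⁻¹ *ᵥ Fv vh w) (fun α i => ∑ β, (Δ sh)⁻¹ α β * vh β i))
    (psimax : ℝ)
    (hpsimax : ∀ w : ι → Fin N → ℝ, MnormPN (Rop (S.symm w)) ≤ psimax * MnormPN w) :
    IsUnit (Δ sh) ∧
    (∀ cc : ι → ℝ,
      Real.sqrt (((Δ sh)⁻¹ *ᵥ cc) ⬝ᵥ ((Δ sh)⁻¹ *ᵥ cc)) ≤ sstar⁻¹ * Real.sqrt (cc ⬝ᵥ cc)) ∧
    ∀ t : (ι → Fin N → ℝ) → ι → ℝ,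
      t 0 = 0 → ContinuousAt t 0 →
      (∀ᶠ w in nhds (0 : ι → Fin N → ℝ), F (sh + t w) (vh + w) = 0) →
      ∀ ε > (0 : ℝ), ∃ δ > (0 : ℝ), ∀ u : ι → Fin N → ℝ,
        MnormPN (u - uA) < δ →
        MnormPN ((fun α i =>
            ∑ β, (Δ (sh + t (S.symm u - vh)))⁻¹ α β * (S.symm u) β i) - uA)
          ≤ (psimax / sstar + ε) * MnormPN (u - uA) := by
  obtain rfl : c = tripleProduct ν Λ := by
    funext α β γ
    exact hc α β γ
  have hM : M.PosDef := PosDef.of_dotProduct_mulVec_pos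
    (by rw [Matrix.IsHermitian, conjTranspose_eq_transpose_of_trivial, hMsymm])
    (fun x hx ↦ by simpa using hMpos x hx)
  subst hF hFv hΔ hT hMnormPN huA hRop
  exact stmt14_general ⟨fun α ↦ (hΛmeas α).aestronglyMeasurable, hortho⟩ hΛbdd hM S hfix hsstar
    (ae_of_all ν hs_lb) hpsimax
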